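/- Let f : [0,1] → [0,1] be continuous, strictly increasing on [0,1/2] and strictly decreasing on [1/2,1], with f(0)=f(1)=0. Suppose x₁, …, x_m ∈ [0,1] form a cycle of odd length m > 1 under f (i.e., f(x_i) = x_{i+1 mod m} and the points are pairwise distinct). Then there exists some i with x_i < 1/2 and f(x_i) ≥ 1/2. -/

import Mathlib

/-!
A periodic point of a monotone self-map of a linear order is fixed; applied to `f ∘ f`, this shows
that a periodic point of an antitone self-map satisfies `f (f p) = p`. If the cycle never leaves the
increasing piece, then either it has points there, which form an invariant set on which `f` is
monotone, or it lies entirely in the decreasing piece. Its length therefore divides `1` or `2`.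
-/

open Function Set

section LinearOrder

variable {α : Type*} [LinearOrder α] {f : α → α} {s : Set α} {p : α}

theorem isFixedPt_of_monotoneOn_of_mem_periodicPts (hf : MonotoneOn f s) (hs : MapsTo f s s)
    (hps : p ∈ s) (hp : p ∈ periodicPts f) : IsFixedPt f p := by
  obtain ⟨n, hn, hpn⟩ := hp
  have hg : Monotone (hs.restrict f s s) := fun a b hab => hf a.2 b.2 hab
  have hpn' : (hs.restrict f s s)^[n] ⟨p, hps⟩ = id^[n] ⟨p, hps⟩ := by
    rw [hs.iterate_restrict, iterate_id]
    exact Subtype.ext hpn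
  exact congrArg Subtype.val
    ((Commute.id_right.iterate_pos_eq_iff_map_eq hg strictMono_id hn).1 hpn')

theorem isPeriodicPt_two_of_antitoneOn_of_mem_periodicPts (hf : AntitoneOn f s)
    (hs : MapsTo f s s) (hps : p ∈ s) (hp : p ∈ periodicPts f) : IsPeriodicPt f 2 p := by
  obtain ⟨n, hn, hpn⟩ := hp
  have hp₂ : p ∈ periodicPts f^[2] := mk_mem_periodicPts hn (hpn.iterate 2)
  exact isFixedPt_of_monotoneOn_of_mem_periodicPts (hf.comp hf hs) (hs.iterate 2) hps hp₂

end LinearOrder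

theorem isPeriodicPt_iff_dvd_of_injective_of_semiconj {α : Type*} {f : α → α} {m : ℕ}
    {x : ZMod m → α} (hinj : Injective x) (hcyc : Semiconj x (· + 1) f) (i : ZMod m) (k : ℕ) :
    IsPeriodicPt f k (x i) ↔ m ∣ k := by
  rw [IsPeriodicPt, IsFixedPt, ← (hcyc.iterate_right k).eq, hinj.eq_iff, add_right_iterate,
    add_eq_left, nsmul_one, ZMod.natCast_eq_zero_iff]

theorem stmt_2_general {α : Type*} [LinearOrder α] {f : α → α} {u v : Set α}
    (hu : MonotoneOn f u) (hv : AntitoneOn f v) {m : ℕ} (hodd : Odd m) (hm : m ≠ 1)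
    {x : ZMod m → α} (hx : ∀ i, x i ∈ u ∪ v) (hinj : Injective x)
    (hcyc : ∀ i, f (x i) = x (i + 1)) : ∃ i, x i ∈ u ∧ f (x i) ∉ u := by
  have hdvd := isPeriodicPt_iff_dvd_of_injective_of_semiconj hinj fun i => (hcyc i).symm
  have hper (i : ZMod m) : x i ∈ periodicPts f :=
    mk_mem_periodicPts hodd.pos ((hdvd i m).2 dvd_rfl)
  have hrange : MapsTo f (range x) (range x) :=
    forall_mem_range.2 fun i => ⟨i + 1, (hcyc i).symm⟩
  by_contra! hstay
  by_cases hleft : ∃ i, x i ∈ u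
  · obtain ⟨i, hi⟩ := hleft
    have hmaps : MapsTo f (range x ∩ u) (range x ∩ u) := by
      rintro _ ⟨⟨j, rfl⟩, hj⟩
      exact ⟨hrange ⟨j, rfl⟩, hstay j hj⟩
    have hfixed : IsFixedPt f (x i) := isFixedPt_of_monotoneOn_of_mem_periodicPts
      (hu.mono inter_subset_right) hmaps ⟨⟨i, rfl⟩, hi⟩ (hper i)
    exact hm (Nat.dvd_one.1 ((hdvd i 1).1 hfixed))
  · have hright : range x ⊆ v :=
      range_subset_iff.2 fun i => (hx i).resolve_left (not_exists.1 hleft i)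
    have htwo : IsPeriodicPt f 2 (x 0) := isPeriodicPt_two_of_antitoneOn_of_mem_periodicPts
      (hv.mono hright) hrange ⟨0, rfl⟩ (hper 0)
    exact hm (hodd.coprime_two_right.eq_one_of_dvd ((hdvd 0 2).1 htwo))

theorem stmt_2 (f : ℝ → ℝ)
    (hmap : Set.MapsTo f (Set.Icc (0:ℝ) 1) (Set.Icc (0:ℝ) 1))
    (hcont : ContinuousOn f (Set.Icc (0:ℝ) 1))
    (hinc : StrictMonoOn f (Set.Icc (0:ℝ) (1/2)))
    (hdec : StrictAntiOn f (Set.Icc (1/2:ℝ) 1))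
    (h0 : f 0 = 0) (h1 : f 1 = 0)
    (m : ℕ) (hodd : Odd m) (hm : 1 < m)
    (x : ZMod m → ℝ) (hx : ∀ i, x i ∈ Set.Icc (0:ℝ) 1)
    (hinj : Function.Injective x)
    (hcyc : ∀ i, f (x i) = x (i + 1)) :
    ∃ i, x i < 1/2 ∧ 1/2 ≤ f (x i) := by
  obtain ⟨i, hi, hfi⟩ := stmt_2_general (hinc.monotoneOn.mono Ico_subset_Icc_self) hdec.antitoneOn
    hodd hm.ne' (fun i => (lt_or_ge (x i) (1 / 2)).imp (⟨(hx i).1, ·⟩) (⟨·, (hx i).2⟩)) hinj hcyc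
  exact ⟨i, hi.2, not_lt.1 fun h => hfi ⟨(hmap (hx i)).1, h⟩⟩
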